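/- arXiv:math/0312232 — 2 statements merged into one kernel-verified Lean document; each statement's English description precedes it below -/
import Mathlib

section
/- Let 0 ≤ r1, r2 ≤ n and 0 ≤ s ≤ min(r1, n − r1, r2, n − r2). Then λ_s^{r1,r2}(r2; n) = (−1)^s · [r1]_s / [n − r1]_s. -/
/-- Falling factorial `z(z-1)⋯(z-k+1)` for complex `z`. -/
noncomputable def cfall (z : ℂ) (k : ℕ) : ℂ := ∏ i ∈ Finset.range k, (z - i)

/-- Generalized binomial coefficient `binom(t, j)` for complex `t`. -/
noncomputable def cbinom (t : ℂ) (j : ℕ) : ℂ := cfall t j / (Nat.factorial j)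

/-- The Hahn kernel `λ_s^{r1,r2}(t; n)`. -/
noncomputable def hahn (n r1 r2 s : ℕ) (t : ℂ) : ℂ :=
  ∑ j ∈ Finset.range (s + 1),
    (-1 : ℂ) ^ j * cbinom t j * cfall (s : ℂ) j * cfall ((n : ℂ) - s + 1) j /
      (cfall ((n : ℂ) - r1) j * cfall (r2 : ℂ) j)

/-!
At `t = r2` the factor `[r2]_j` cancels, leaving `∑ j, (-1)^j binom(s, j) [n-s+1]_j / [n-r1]_j`.
Since `[a]_s = [a]_j [a-j]_{s-j}`, multiplying such a sum by its last denominator removes all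
quotients. The reflection `[x]_k = (-1)^k [k-1-x]_k` turns `[a-j]_{s-j}` into
`±[s-1-a]_{s-j}`, whose argument no longer depends on `j`, so the Chu–Vandermonde identity applies.
-/

open Finset Polynomial

section descPochhammer

variable {R : Type*} [CommRing R]

theorem descPochhammer_eval_mul_eval_sub (x : R) (m k : ℕ) :
    (descPochhammer R m).eval x * (descPochhammer R k).eval (x - m) =
      (descPochhammer R (m + k)).eval x := by
  simp [← descPochhammer_mul, eval_comp]

theorem descPochhammer_eval_reflect (x : R) (k : ℕ) :
    (descPochhammer R k).eval (k - 1 - x) = (-1) ^ k * (descPochhammer R k).eval x := by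
  rw [descPochhammer_eval_eq_ascPochhammer, ← ascPochhammer_eval_neg_eq_descPochhammer]
  congr 1
  ring

theorem descPochhammer_eval_add (x y : R) (k : ℕ) :
    (descPochhammer R k).eval (x + y) = ∑ ij ∈ antidiagonal k,
      k.choose ij.1 * ((descPochhammer R ij.1).eval x * (descPochhammer R ij.2).eval y) := by
  have eval_eq_smeval (m : ℕ) (z : R) :
      (descPochhammer R m).eval z = (descPochhammer ℤ m).smeval z := by
    rw [← descPochhammer_map (algebraMap ℤ R), eval_map_algebraMap, aeval_eq_smeval]
  simp only [eval_eq_smeval, Ring.descPochhammer_smeval_add k (Commute.all x y)]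

theorem sum_antidiagonal_neg_one_pow_mul_choose_mul_descPochhammer_eval (a b : R) (s : ℕ) :
    ∑ ij ∈ antidiagonal s, (-1) ^ ij.1 * (s.choose ij.1 : R) *
        ((descPochhammer R ij.1).eval b * (descPochhammer R ij.2).eval (a - ij.1)) =
      (descPochhammer R s).eval (a - b) := by
  have reflect_term (i j : ℕ) : (descPochhammer R j).eval (a - i) =
      (-1) ^ j * (descPochhammer R j).eval (((i + j : ℕ) : R) - 1 - a) := by
    rw [← descPochhammer_eval_reflect]
    congr 1
    push_cast
    ring
  calc
    _ = ∑ ij ∈ antidiagonal s, (-1) ^ s * ((s.choose ij.1 : R) *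
          ((descPochhammer R ij.1).eval b * (descPochhammer R ij.2).eval ((s : R) - 1 - a))) := by
      refine sum_congr rfl fun ij hij => ?_
      rw [reflect_term, mem_antidiagonal.mp hij, ← mem_antidiagonal.mp hij, pow_add]
      ring
    _ = (-1) ^ s * (descPochhammer R s).eval ((s : R) - 1 - (a - b)) := by
      rw [← mul_sum, ← descPochhammer_eval_add]
      congr 2
      ring
    _ = (descPochhammer R s).eval (a - b) := by
      rw [descPochhammer_eval_reflect, ← mul_assoc, ← mul_pow, neg_one_mul, neg_neg, one_pow,
        one_mul]

theorem sum_range_neg_one_pow_mul_choose_mul_descPochhammer_eval_div {K : Type*} [Field K]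
    {a : K} {s : ℕ} (ha : (descPochhammer K s).eval a ≠ 0) (b : K) :
    ∑ j ∈ range (s + 1), (-1) ^ j * (s.choose j : K) *
        ((descPochhammer K j).eval b / (descPochhammer K j).eval a) =
      (descPochhammer K s).eval (a - b) / (descPochhammer K s).eval a := by
  rw [← sum_antidiagonal_neg_one_pow_mul_choose_mul_descPochhammer_eval, sum_div,
    Nat.sum_antidiagonal_eq_sum_range_succ_mk]
  refine sum_congr rfl fun j hj => ?_
  have split_eval := descPochhammer_eval_mul_eval_sub a j (s - j)
  rw [Nat.add_sub_cancel' (mem_range_succ_iff.mp hj)] at split_eval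
  rw [← split_eval] at ha ⊢
  rw [mul_div_assoc, mul_div_mul_right _ _ (right_ne_zero_of_mul ha)]

end descPochhammer

theorem cfall_eq_descPochhammer_eval (z : ℂ) (k : ℕ) :
    cfall z k = (descPochhammer ℂ k).eval z :=
  (descPochhammer_eval_eq_prod_range k z).symm

theorem cfall_natCast (m k : ℕ) : cfall m k = m.descFactorial k := by
  rw [cfall_eq_descPochhammer_eval, descPochhammer_eval_eq_descFactorial]

theorem cfall_natCast_ne_zero {m k : ℕ} (hk : k ≤ m) : cfall m k ≠ 0 := by
  rw [cfall_natCast, Nat.cast_ne_zero]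
  exact (Nat.descFactorial_pos.mpr hk).ne'

theorem cbinom_mul_cfall_natCast (t : ℂ) (s j : ℕ) :
    cbinom t j * cfall s j = cfall t j * s.choose j := by
  have hfactorial : (j.factorial : ℂ) ≠ 0 := Nat.cast_ne_zero.mpr j.factorial_ne_zero
  rw [cbinom, cfall_natCast, Nat.descFactorial_eq_factorial_mul_choose, Nat.cast_mul]
  field_simp

theorem hahn_natCast_self (n r1 : ℕ) {r2 s : ℕ} (hs : s ≤ r2) :
    hahn n r1 r2 s r2 = ∑ j ∈ range (s + 1), (-1) ^ j * (s.choose j : ℂ) *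
      (cfall ((n : ℂ) - s + 1) j / cfall ((n : ℂ) - r1) j) := by
  refine sum_congr rfl fun j hj => ?_
  have hr2 : cfall r2 j ≠ 0 := cfall_natCast_ne_zero ((mem_range_succ_iff.mp hj).trans hs)
  rw [mul_assoc _ (cbinom _ _), cbinom_mul_cfall_natCast]
  field_simp

theorem stmt_7_general (n r1 : ℕ) {r2 s : ℕ} (hr2 : s ≤ r2)
    (hn : cfall ((n : ℂ) - r1) s ≠ 0) :
    hahn n r1 r2 s (r2 : ℂ) = (-1 : ℂ) ^ s * cfall (r1 : ℂ) s / cfall ((n : ℂ) - r1) s := by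
  rw [hahn_natCast_self n r1 hr2]
  simp only [cfall_eq_descPochhammer_eval] at hn ⊢
  rw [sum_range_neg_one_pow_mul_choose_mul_descPochhammer_eval_div hn,
    ← descPochhammer_eval_reflect]
  congr 2
  ring

/-- For `0 ≤ r1, r2 ≤ n` and `0 ≤ s ≤ min(r1, n-r1, r2, n-r2)`,
`λ_s^{r1,r2}(r2; n) = (-1)^s [r1]_s / [n-r1]_s`. -/
theorem stmt_7 (n r1 r2 s : ℕ) (h1 : r1 ≤ n) (h2 : r2 ≤ n)
    (hs : s ≤ min (min r1 (n - r1)) (min r2 (n - r2))) :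
    hahn n r1 r2 s (r2 : ℂ) = (-1 : ℂ) ^ s * cfall (r1 : ℂ) s / cfall ((n : ℂ) - r1) s := by
  refine stmt_7_general n r1 (by omega) ?_
  exact Nat.cast_sub (R := ℂ) h1 ▸ cfall_natCast_ne_zero (by omega)
end

section
/- Let 0 ≤ r1, r2 ≤ n and 0 ≤ s ≤ min(r1, n − r1, r2, n − r2). Then L^{(r2)} ∘ Λ_s^{r1,r2} = −s(n − s + 1) · Λ_s^{r1,r2} as linear maps (X_{r1} → ℂ) → (X_{r2} → ℂ); that is, Λ_s^{r1,r2} is an eigenvector of the transposition Laplacian with eigenvalue −s(n − s + 1). -/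
/-- The operator `Λ_s^{r1,r2} : (X_{r1} → ℂ) → (X_{r2} → ℂ)` with kernel
`λ_s^{r1,r2}(|x2 \ x1|; n)`. -/
noncomputable def Lam (Ω : Type*) [Fintype Ω] [DecidableEq Ω] (n r1 r2 s : ℕ)
    (ψ : {x : Finset Ω // x.card = r1} → ℂ) : {x : Finset Ω // x.card = r2} → ℂ :=
  fun x2 => ∑ x1 : {x : Finset Ω // x.card = r1},
    hahn n r1 r2 s ((((x2 : Finset Ω) \ (x1 : Finset Ω)).card : ℕ) : ℂ) * ψ x1

/-- The action of a permutation `g` of `Ω` on `r`-element subsets, by taking images. -/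
def permAct {Ω : Type*} [DecidableEq Ω] (g : Equiv.Perm Ω) {r : ℕ}
    (x : {x : Finset Ω // x.card = r}) : {x : Finset Ω // x.card = r} :=
  ⟨x.1.image g, by rw [Finset.card_image_of_injective _ g.injective]; exact x.2⟩

open scoped Classical in
/-- The transposition Laplacian on functions `X_r → ℂ`:
`(Lφ)(x) = Σ_{g a transposition} φ(g(x)) - binom(n,2) φ(x)`. -/
noncomputable def Lap {Ω : Type*} [Fintype Ω] [DecidableEq Ω] {r : ℕ}
    (φ : {x : Finset Ω // x.card = r} → ℂ) : {x : Finset Ω // x.card = r} → ℂ :=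
  fun x => (∑ g : Equiv.Perm Ω, if g.IsSwap then φ (permAct g x) else 0) -
    (((Fintype.card Ω).choose 2 : ℕ) : ℂ) * φ x

/-!
For fixed `y`, a transposition changes `t = #(x \ y)` by at most one: it drops to `t - 1` when an
element of `x \ y` is exchanged with one of `y \ x`, grows to `t + 1` when an element of `x ∩ y` is
exchanged with one of `(x ∪ y)ᶜ`, and is unchanged otherwise. Counting these pairs, the
Laplacian of an operator whose kernel is a function of `t` is the operator whose kernel is obtained
by applying a second-order difference operator in `t`. That operator is upper bidiagonal in the
basis `t ↦ binom(t, j)`, and the coefficients of the Hahn kernel in this basis satisfy exactly the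
two-term recurrence that makes it an eigenvector.
-/

open Finset

section DifferenceOperator

variable {R : Type*} [CommRing R]

/-- The Hahn difference operator, acting on functions of `t = #(x \ y)` for sets `x`, `y` of sizes
`R₂`, `R₁` in an ambient set of size `N`. The two weights are the numbers of transpositions which
lower, respectively raise, `t` by one. -/
def hahnDiff (N R₁ R₂ : R) : (R → R) →ₗ[R] (R → R) where
  toFun f t := t * (R₁ - R₂ + t) * (f (t - 1) - f t) +
    (R₂ - t) * (N - R₁ - t) * (f (t + 1) - f t)
  map_add' f g := by
    ext t
    simp only [Pi.add_apply]
    ring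
  map_smul' c f := by
    ext t
    simp only [Pi.smul_apply, smul_eq_mul, RingHom.id_apply]
    ring

theorem hahnDiff_apply (N R₁ R₂ : R) (f : R → R) (t : R) :
    hahnDiff N R₁ R₂ f t = t * (R₁ - R₂ + t) * (f (t - 1) - f t) +
      (R₂ - t) * (N - R₁ - t) * (f (t + 1) - f t) :=
  rfl

variable [BinomialRing R]

theorem succ_mul_ringChoose_succ (t : R) (k : ℕ) :
    (k + 1) * Ring.choose t (k + 1) = (t - k) * Ring.choose t k := by
  simpa [mul_comm] using Ring.choose_smul_choose t k.le_succ

theorem succ_mul_ringChoose_succ_eq_mul_sub_one (t : R) (k : ℕ) :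
    (k + 1) * Ring.choose t (k + 1) = t * Ring.choose (t - 1) k := by
  simpa using Ring.choose_smul_choose t k.succ_pos

theorem hahnDiff_choose_zero (N R₁ R₂ : R) :
    hahnDiff N R₁ R₂ (Ring.choose · 0) = 0 := by
  ext t
  simp [hahnDiff_apply]

theorem hahnDiff_choose_succ (N R₁ R₂ : R) (k : ℕ) :
    hahnDiff N R₁ R₂ (Ring.choose · (k + 1)) =
      ((N - R₁ - k) * (R₂ - k)) • (Ring.choose · k) -
        ((k + 1) * (N - k)) • (Ring.choose · (k + 1)) := by
  ext t
  have forward : Ring.choose (t + 1) (k + 1) = Ring.choose t k + Ring.choose t (k + 1) :=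
    Ring.choose_succ_succ t k
  have backward : Ring.choose t (k + 1) = Ring.choose (t - 1) k + Ring.choose (t - 1) (k + 1) := by
    simpa using Ring.choose_succ_succ (t - 1) k
  simp only [hahnDiff_apply, Pi.sub_apply, Pi.smul_apply, smul_eq_mul]
  linear_combination (R₂ - t) * (N - R₁ - t) * forward - t * (R₁ - R₂ + t) * backward +
    (R₁ - R₂ + t) * succ_mul_ringChoose_succ_eq_mul_sub_one t k +
    (R₂ + (N - R₁ - k) - t) * succ_mul_ringChoose_succ t k

-- The eigenvalue equation telescopes; the last term vanishes for `m = σ`.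
theorem hahnDiff_sum_smul_choose (N R₁ R₂ σ : R) (c : ℕ → R) (m : ℕ)
    (hc : ∀ k < m, c (k + 1) * ((N - R₁ - k) * (R₂ - k)) =
      -(c k * ((σ - k) * (N - σ + 1 - k)))) :
    hahnDiff N R₁ R₂ (∑ j ∈ range (m + 1), c j • (Ring.choose · j)) =
      -(σ * (N - σ + 1)) • ∑ j ∈ range (m + 1), c j • (Ring.choose · j) +
        (c m * ((σ - m) * (N - σ + 1 - m))) • (Ring.choose · m) := by
  induction m with
  | zero =>
    simp only [zero_add, sum_range_one, map_smul, hahnDiff_choose_zero, Nat.cast_zero]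
    module
  | succ m ih =>
    rw [sum_range_succ, map_add, ih fun k hk => hc k (hk.trans m.lt_succ_self), map_smul,
      hahnDiff_choose_succ]
    push_cast
    linear_combination (norm := module) hc m m.lt_succ_self • (Ring.choose · m : R → R)

end DifferenceOperator

section HahnKernel

theorem cfall_succ (z : ℂ) (k : ℕ) : cfall z (k + 1) = cfall z k * (z - k) :=
  prod_range_succ _ _

theorem cbinom_eq_ringChoose (t : ℂ) (j : ℕ) : cbinom t j = Ring.choose t j := by
  have smeval_eq_cfall : (descPochhammer ℤ j).smeval t = cfall t j := by
    rw [← Polynomial.aeval_eq_smeval, Polynomial.aeval_def, Polynomial.eval₂_eq_eval_map,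
      descPochhammer_map, descPochhammer_eval_eq_prod_range, cfall]
  rw [Ring.choose_eq_smul, smeval_eq_cfall, smul_eq_mul, cbinom, div_eq_inv_mul]

/-- The coefficient of `binom(t, j)` in the Hahn kernel, with complex parameters `N`, `R₁`, `R₂`,
`σ` in place of `n`, `r1`, `r2`, `s`. -/
noncomputable def hahnCoeff (N R₁ R₂ σ : ℂ) (j : ℕ) : ℂ :=
  (-1) ^ j * cfall σ j * cfall (N - σ + 1) j / (cfall (N - R₁) j * cfall R₂ j)

theorem hahnCoeff_succ_mul {N R₁ R₂ : ℂ} {k : ℕ} (h₁ : N - R₁ - k ≠ 0) (h₂ : R₂ - k ≠ 0) (σ : ℂ) :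
    hahnCoeff N R₁ R₂ σ (k + 1) * ((N - R₁ - k) * (R₂ - k)) =
      -(hahnCoeff N R₁ R₂ σ k * ((σ - k) * (N - σ + 1 - k))) := by
  simp only [hahnCoeff, cfall_succ]
  field_simp
  ring

theorem hahn_eq_sum_smul_choose (n r1 r2 s : ℕ) :
    hahn n r1 r2 s = ∑ j ∈ range (s + 1), hahnCoeff n r1 r2 s j • (Ring.choose · j) := by
  ext t
  simp only [hahn, hahnCoeff, cbinom_eq_ringChoose, Finset.sum_apply, Pi.smul_apply, smul_eq_mul]
  exact sum_congr rfl fun j _ => by ring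

theorem hahnDiff_hahn {n r1 r2 s : ℕ} (h1 : r1 + s ≤ n) (h2 : s ≤ r2) :
    hahnDiff (n : ℂ) r1 r2 (hahn n r1 r2 s) =
      (-((s : ℂ) * ((n : ℂ) - s + 1))) • hahn n r1 r2 s := by
  rw [hahn_eq_sum_smul_choose, hahnDiff_sum_smul_choose (σ := (s : ℂ)), sub_self, zero_mul,
    mul_zero, zero_smul, add_zero]
  intro k hk
  refine hahnCoeff_succ_mul ?_ ?_ _
  · rw [sub_sub, sub_ne_zero]
    exact_mod_cast (by omega : n ≠ r1 + k)
  · rw [sub_ne_zero]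
    exact_mod_cast (by omega : r2 ≠ k)

end HahnKernel

section Transpositions

variable {Ω : Type*} [DecidableEq Ω]

theorem image_swap_eq_insert_erase {x : Finset Ω} {i j : Ω} (hi : i ∈ x) (hj : j ∉ x) :
    x.image (Equiv.swap i j) = insert j (x.erase i) := by
  have hij : j ≠ i := (ne_of_mem_of_not_mem hi hj).symm
  rw [← erase_insert_of_ne hij, ← coe_inj, coe_image, coe_erase, coe_insert]
  exact Equiv.image_swap_of_mem_of_notMem hi hj

theorem image_swap_eq_self {x : Finset Ω} {i j : Ω} (h : i ∈ x ↔ j ∈ x) :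
    x.image (Equiv.swap i j) = x := by
  refine eq_of_subset_of_card_le (fun k hk => ?_)
    (card_image_of_injective _ (Equiv.injective _)).ge
  obtain ⟨a, ha, rfl⟩ := mem_image.1 hk
  grind

theorem injOn_swap_product_of_disjoint {x y : Finset Ω} (hxy : Disjoint x y) :
    Set.InjOn (fun p : Ω × Ω => Equiv.swap p.1 p.2) (x ×ˢ y : Finset (Ω × Ω)) := by
  rintro ⟨i, j⟩ hij ⟨i', j'⟩ hij' (heq : Equiv.swap i j = Equiv.swap i' j')
  simp only [coe_product, Set.mem_prod, mem_coe] at hij hij'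
  have hmap : Equiv.swap i' j' i = j := heq ▸ Equiv.swap_apply_left i j
  have hne : ∀ a ∈ x, ∀ b ∈ y, a ≠ b := fun a ha b hb => disjoint_iff_ne.1 hxy a ha b hb
  grind

variable [Fintype Ω]

theorem card_filter_isSwap [DecidablePred fun g : Equiv.Perm Ω => g.IsSwap] :
    #{g : Equiv.Perm Ω | g.IsSwap} = (Fintype.card Ω).choose 2 := by
  simp only [Equiv.Perm.isSwap_iff_cycleType]
  by_cases h : 2 ≤ Fintype.card Ω
  · simpa using Equiv.Perm.card_of_cycleType_singleton le_rfl h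
  · rw [Nat.choose_eq_zero_of_lt (not_le.1 h), card_eq_zero, filter_eq_empty_iff]
    intro g _ hg
    exact h ((Equiv.Perm.card_support_eq_two.2 (Equiv.Perm.isSwap_iff_cycleType.2 hg)).ge.trans
      (card_le_univ _))

theorem sum_isSwap_eq_sum_sum_compl [DecidablePred fun g : Equiv.Perm Ω => g.IsSwap]
    {M : Type*} [AddCommMonoid M] (x : Finset Ω) (f : Equiv.Perm Ω → M)
    (hf : ∀ g : Equiv.Perm Ω, x.image g = x → f g = 0) :
    ∑ g with Equiv.Perm.IsSwap g, f g = ∑ i ∈ x, ∑ j ∈ xᶜ, f (Equiv.swap i j) := by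
  rw [← sum_product']
  refine (sum_of_injOn (fun p : Ω × Ω => Equiv.swap p.1 p.2)
    (injOn_swap_product_of_disjoint disjoint_compl_right) ?_ ?_ fun _ _ => rfl).symm
  · rintro ⟨i, j⟩ hij
    simp only [coe_product, Set.mem_prod, mem_coe, mem_compl] at hij
    exact mem_coe.2 (mem_filter.2 ⟨mem_univ _, i, j, ne_of_mem_of_not_mem hij.1 hij.2, rfl⟩)
  · intro g hg hnot
    obtain ⟨a, b, -, rfl⟩ := (mem_filter.1 hg).2
    refine hf _ (image_swap_eq_self ?_)
    by_contra hab
    rcases (by tauto : a ∈ x ∧ b ∉ x ∨ b ∈ x ∧ a ∉ x) with ⟨ha, hb⟩ | ⟨hb, ha⟩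
    · exact hnot ⟨(a, b), by simp [ha, hb], rfl⟩
    · exact hnot ⟨(b, a), by simp [ha, hb], Equiv.swap_comm b a⟩

theorem Lap_apply_eq_sum_sum_compl {r : ℕ} (φ : {x : Finset Ω // #x = r} → ℂ)
    (x : {x : Finset Ω // #x = r}) :
    Lap φ x = ∑ i ∈ x.1, ∑ j ∈ x.1ᶜ, (φ (permAct (Equiv.swap i j) x) - φ x) := by
  classical
  rw [← sum_isSwap_eq_sum_sum_compl x.1 (fun g => φ (permAct g x) - φ x)
    fun g hg => by rw [show permAct g x = x from Subtype.ext hg, sub_self]]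
  rw [Lap, sum_sub_distrib, sum_const, card_filter_isSwap, nsmul_eq_mul, sum_filter]

end Transpositions

section SdiffKernel

variable {Ω : Type*} [DecidableEq Ω] {R : Type*}

theorem cast_card_image_swap_sdiff [AddCommGroupWithOne R] {x : Finset Ω} (y : Finset Ω) {i j : Ω}
    (hi : i ∈ x) (hj : j ∉ x) :
    (#(x.image (Equiv.swap i j) \ y) : R) =
      #(x \ y) - (if i ∉ y then 1 else 0) + (if j ∉ y then 1 else 0) := by
  simp only [sdiff_eq_filter, natCast_card_filter]
  rw [image_swap_eq_insert_erase hi hj, sum_insert (by simp [hj]), sum_erase_eq_sub hi, add_comm]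

theorem cast_card_inter_eq_sub [AddGroupWithOne R] (x y : Finset Ω) :
    (#(x ∩ y) : R) = #x - #(x \ y) := by
  rw [eq_sub_iff_add_eq, ← Nat.cast_add, card_inter_add_card_sdiff]

variable [Fintype Ω]

theorem cast_card_compl_eq_sub [AddGroupWithOne R] (x : Finset Ω) :
    (#xᶜ : R) = Fintype.card Ω - #x := by
  rw [eq_sub_iff_add_eq, ← Nat.cast_add, card_compl_add_card]

theorem cast_card_compl_sdiff [AddGroupWithOne R] (x y : Finset Ω) :
    (#(xᶜ \ y) : R) = Fintype.card Ω - #y - #(x \ y) := by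
  rw [sdiff_eq_inter_compl, ← compl_union, cast_card_compl_eq_sub, ← card_sdiff_add_card,
    Nat.cast_add, sub_add_eq_sub_sub_swap]

theorem sum_sum_compl_image_swap_sdiff [CommRing R] (x y : Finset Ω) (F : R → R) :
    ∑ i ∈ x, ∑ j ∈ xᶜ, (F #(x.image (Equiv.swap i j) \ y) - F #(x \ y)) =
      hahnDiff (Fintype.card Ω : R) #y #x F #(x \ y) := by
  set t : R := (#(x \ y) : R) with ht
  have term_eq : ∀ i ∈ x, ∀ j ∈ xᶜ, F #(x.image (Equiv.swap i j) \ y) - F t =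
      (if i ∉ y then 1 else 0) * (if j ∈ y then 1 else 0) * (F (t - 1) - F t) +
        (if i ∈ y then 1 else 0) * (if j ∉ y then 1 else 0) * (F (t + 1) - F t) := by
    intro i hi j hj
    rw [cast_card_image_swap_sdiff y hi (mem_compl.1 hj)]
    by_cases hiy : i ∈ y <;> by_cases hjy : j ∈ y <;> simp [hiy, hjy, ← ht]
  rw [sum_congr rfl fun i hi => sum_congr rfl (term_eq i hi)]
  simp only [sum_add_distrib, ← sum_mul, ← mul_sum, ← natCast_card_filter, filter_mem_eq_inter,
    ← sdiff_eq_filter, cast_card_inter_eq_sub, cast_card_compl_sdiff, cast_card_compl_eq_sub,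
    ← ht, hahnDiff_apply]
  ring

/-- The operator from functions on `r₁`-subsets to functions on `r₂`-subsets whose kernel at
`(x₂, x₁)` is `F #(x₂ \ x₁)`. The operator `Lam` is the case where `F` is the Hahn kernel. -/
noncomputable def sdiffKernelOp (F : ℂ → ℂ) {r₁ : ℕ} (r₂ : ℕ) (ψ : {x : Finset Ω // #x = r₁} → ℂ) :
    {x : Finset Ω // #x = r₂} → ℂ :=
  fun x₂ => ∑ x₁, F #(x₂.1 \ x₁.1) * ψ x₁

theorem Lam_eq_sdiffKernelOp (n r1 r2 s : ℕ) (ψ : {x : Finset Ω // #x = r1} → ℂ) :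
    Lam Ω n r1 r2 s ψ = sdiffKernelOp (hahn n r1 r2 s) r2 ψ :=
  rfl

theorem sdiffKernelOp_smul (c : ℂ) (F : ℂ → ℂ) {r₁ r₂ : ℕ} (ψ : {x : Finset Ω // #x = r₁} → ℂ) :
    sdiffKernelOp (c • F) r₂ ψ = c • sdiffKernelOp F r₂ ψ := by
  ext x₂
  simp only [sdiffKernelOp, Pi.smul_apply, smul_eq_mul, mul_sum, mul_assoc]

theorem Lap_sdiffKernelOp (F : ℂ → ℂ) {r₁ r₂ : ℕ} (ψ : {x : Finset Ω // #x = r₁} → ℂ) :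
    Lap (sdiffKernelOp F r₂ ψ) = sdiffKernelOp (hahnDiff (Fintype.card Ω : ℂ) r₁ r₂ F) r₂ ψ := by
  ext x₂
  calc Lap (sdiffKernelOp F r₂ ψ) x₂
      = ∑ i ∈ x₂.1, ∑ j ∈ x₂.1ᶜ, ∑ x₁,
          (F #(x₂.1.image (Equiv.swap i j) \ x₁.1) - F #(x₂.1 \ x₁.1)) * ψ x₁ := by
        simp only [Lap_apply_eq_sum_sum_compl, sdiffKernelOp, permAct, ← sum_sub_distrib, sub_mul]
    _ = ∑ x₁, (∑ i ∈ x₂.1, ∑ j ∈ x₂.1ᶜ,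
          (F #(x₂.1.image (Equiv.swap i j) \ x₁.1) - F #(x₂.1 \ x₁.1))) * ψ x₁ := by
        simp only [sum_mul]
        rw [sum_congr rfl fun i _ => sum_comm, sum_comm]
    _ = sdiffKernelOp (hahnDiff (Fintype.card Ω : ℂ) r₁ r₂ F) r₂ ψ x₂ :=
        sum_congr rfl fun x₁ _ => by rw [sum_sum_compl_image_swap_sdiff, x₁.2, x₂.2]

end SdiffKernel

theorem stmt_12_general {Ω : Type*} [Fintype Ω] [DecidableEq Ω] (n r1 r2 s : ℕ)
    (hn : Fintype.card Ω = n) (h1 : r1 + s ≤ n) (h2 : s ≤ r2)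
    (ψ : {x : Finset Ω // x.card = r1} → ℂ) :
    Lap (Lam Ω n r1 r2 s ψ) =
      (-((s : ℂ) * ((n : ℂ) - s + 1))) • Lam Ω n r1 r2 s ψ := by
  rw [Lam_eq_sdiffKernelOp, Lap_sdiffKernelOp, hn, hahnDiff_hahn h1 h2, sdiffKernelOp_smul]

/-- `Λ_s^{r1,r2}` is an eigenvector of the transposition Laplacian with eigenvalue
`-s(n-s+1)`: `L^{(r2)} ∘ Λ_s^{r1,r2} = -s(n-s+1) Λ_s^{r1,r2}`. -/
theorem stmt_12 {Ω : Type*} [Fintype Ω] [DecidableEq Ω] (n r1 r2 s : ℕ)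
    (hn : Fintype.card Ω = n) (h1 : r1 ≤ n) (h2 : r2 ≤ n)
    (hs : s ≤ min (min r1 (n - r1)) (min r2 (n - r2)))
    (ψ : {x : Finset Ω // x.card = r1} → ℂ) :
    Lap (Lam Ω n r1 r2 s ψ) =
      (-((s : ℂ) * ((n : ℂ) - s + 1))) • Lam Ω n r1 r2 s ψ := by
  exact stmt_12_general n r1 r2 s hn (by omega) (by omega) ψ
end
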